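/- Let X and Y be countable types, μ ∈ PMF X, ν ∈ PMF Y, and α : X → Y → ℝ with values in [0,1]. If Wα(μ, ν) = 0, then there exists a coupling ω ∈ Ω(μ, ν) such that for all x ∈ X and y ∈ Y, ω(x, y) > 0 implies α(x, y) = 0. (This expresses that the Wasserstein lifting is compatible with the kernel map φ sending a distance to the assertion that it equals the quantale unit.) -/

import Mathlib

open scoped ENNReal

/-- `ω` is a coupling of `μ` and `ν`: a joint distribution with marginals `μ` and `ν`. -/
def IsCoupling {X Y : Type*} (μ : PMF X) (ν : PMF Y) (ω : PMF (X × Y)) : Prop :=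
  (∀ x, ∑' y, ω (x, y) = μ x) ∧ ∀ y, ∑' x, ω (x, y) = ν y

/-- The transport cost `∑_{x,y} α(x,y) · ω(x,y)` of a joint distribution `ω`. -/
noncomputable def Wcost {X Y : Type*} (α : X → Y → ℝ) (ω : PMF (X × Y)) : ℝ :=
  ∑' p : X × Y, α p.1 p.2 * (ω p).toReal

/-- The Wasserstein lifting `W α(μ, ν) = inf { Wcost α ω | ω coupling of μ, ν }`. -/
noncomputable def Wass {X Y : Type*} (α : X → Y → ℝ) (μ : PMF X) (ν : PMF Y) : ℝ :=
  sInf (Wcost α '' {ω | IsCoupling μ ν ω})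

open Filter Topology in
theorem aux_marginal {Y : Type*} (U : Filter ℕ) [U.NeBot] (f : ℕ → Y → ℝ≥0∞) (g : Y → ℝ≥0∞)
    (ν : PMF Y) (m : ℝ≥0∞) (hf : ∀ n, ∑' y, f n y = m) (hb : ∀ n y, f n y ≤ ν y)
    (hg : ∀ y, Tendsto (fun n => f n y) U (𝓝 (g y))) : ∑' y, g y = m := by
  have hgb : ∀ y, g y ≤ ν y := fun y => le_of_tendsto (hg y) (Eventually.of_forall fun n => hb n y)
  have hν : ∀ y, ν y ≠ ⊤ := fun y => ν.apply_ne_top y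
  have hgt : ∀ y, g y ≠ ⊤ := fun y => ne_top_of_le_ne_top (hν y) (hgb y)
  have hft : ∀ n y, f n y ≠ ⊤ := fun n y => ne_top_of_le_ne_top (hν y) (hb n y)
  have hgs : ∑' y, g y ≠ ⊤ := ne_top_of_le_ne_top ν.tsum_coe_ne_top (ENNReal.tsum_le_tsum hgb)
  have hm : m ≠ ⊤ := by
    rw [← hf 0]
    exact ne_top_of_le_ne_top ν.tsum_coe_ne_top (ENNReal.tsum_le_tsum (hb 0))
  have key := tendsto_tsum_of_dominated_convergence (𝓕 := U)
    (f := fun n y => (f n y).toReal) (g := fun y => (g y).toReal)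
    (bound := fun y => (ν y).toReal) (ENNReal.summable_toReal ν.tsum_coe_ne_top)
    (fun y => (ENNReal.tendsto_toReal (hgt y)).comp (hg y))
    (Eventually.of_forall fun n y => by
      rw [Real.norm_of_nonneg ENNReal.toReal_nonneg]
      exact ENNReal.toReal_mono (hν y) (hb n y))
  have h1 : ∀ n, ∑' y, (f n y).toReal = m.toReal := fun n => by
    rw [← hf n, ENNReal.tsum_toReal_eq (hft n)]
  simp only [h1] at key
  have h2 := tendsto_nhds_unique key tendsto_const_nhds
  rw [← ENNReal.tsum_toReal_eq hgt] at h2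
  exact (ENNReal.toReal_eq_toReal_iff' hgs hm).1 h2

theorem aux_exists {X Y : Type*} (μ : PMF X) (ν : PMF Y) : ∃ ω, IsCoupling μ ν ω := by
  refine ⟨⟨fun p => μ p.1 * ν p.2, ?_⟩, ?_, ?_⟩
  · rw [ENNReal.summable.hasSum_iff, ENNReal.tsum_prod (f := fun x y => μ x * ν y)]
    simp [ENNReal.tsum_mul_left, PMF.tsum_coe]
  · intro x
    change ∑' y, μ x * ν y = _
    simp [ENNReal.tsum_mul_left, PMF.tsum_coe]
  · intro y
    change ∑' x, μ x * ν y = _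
    simp [ENNReal.tsum_mul_right, PMF.tsum_coe]

/-- if `W α(μ, ν) = 0` then there is a coupling `ω` of `μ` and `ν` such
that `α(x, y) = 0` whenever `ω(x, y) > 0` (compatibility of the Wasserstein lifting
with the kernel map `φ`). -/
theorem wasserstein_kernel {X Y : Type*} [Countable X] [Countable Y]
    (μ : PMF X) (ν : PMF Y) (α : X → Y → ℝ)
    (hα : ∀ x y, α x y ∈ Set.Icc (0 : ℝ) 1)
    (h : Wass α μ ν = 0) :
    ∃ ω, IsCoupling μ ν ω ∧ ∀ x y, 0 < ω (x, y) → α x y = 0 := by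
  have hterm : ∀ (ω : PMF (X × Y)) p, 0 ≤ α p.1 p.2 * (ω p).toReal := fun ω p =>
    mul_nonneg (hα _ _).1 ENNReal.toReal_nonneg
  obtain ⟨ω0, hω0⟩ := aux_exists μ ν
  obtain ⟨u, -, hu, hmem⟩ := exists_seq_tendsto_sInf
    (S := Wcost α '' {ω | IsCoupling μ ν ω}) ⟨_, ω0, hω0, rfl⟩
    ⟨0, by rintro _ ⟨ω, -, rfl⟩; exact tsum_nonneg (hterm ω)⟩
  change Filter.Tendsto u Filter.atTop (nhds (Wass α μ ν)) at hu
  rw [h] at hu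
  choose w hw hwu using hmem
  let U : Ultrafilter ℕ := Filter.hyperfilter ℕ
  have hU : (U : Filter ℕ) ≤ Filter.atTop := Nat.hyperfilter_le_atTop
  have hlim : ∀ p, ∃ a, Filter.Tendsto (fun n => w n p) U (nhds a) := fun p =>
    ⟨_, (U.map fun n => w n p).le_nhds_lim⟩
  choose g hg using hlim
  have hX : ∀ x, ∑' y, g (x, y) = μ x := fun x =>
    aux_marginal U (fun n y => w n (x, y)) _ ν _ (fun n => (hw n).1 x)
      (fun n y => by rw [← (hw n).2 y]; exact ENNReal.le_tsum (f := fun x => w n (x, y)) x)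
      (fun y => hg _)
  have hY : ∀ y, ∑' x, g (x, y) = ν y := fun y =>
    aux_marginal U (fun n x => w n (x, y)) _ μ _ (fun n => (hw n).2 y)
      (fun n x => by rw [← (hw n).1 x]; exact ENNReal.le_tsum (f := fun y => w n (x, y)) y)
      (fun x => hg _)
  refine ⟨⟨g, ?_⟩, ⟨hX, hY⟩, ?_⟩
  · rw [ENNReal.summable.hasSum_iff, ENNReal.tsum_prod (f := fun x y => g (x, y))]
    simp only [hX, PMF.tsum_coe]
  · intro x y hpos
    change 0 < g (x, y) at hpos
    have hgt : g (x, y) ≠ ⊤ := by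
      refine ne_top_of_le_ne_top (μ.apply_ne_top x) ?_
      rw [← hX x]
      exact ENNReal.le_tsum (f := fun y => g (x, y)) y
    have h1 : Filter.Tendsto (fun n => α x y * (w n (x, y)).toReal) U
        (nhds (α x y * (g (x, y)).toReal)) :=
      ((ENNReal.tendsto_toReal hgt).comp (hg (x, y))).const_mul _
    have h2 : α x y * (g (x, y)).toReal ≤ 0 := by
      refine le_of_tendsto_of_tendsto' h1 (hu.mono_left hU) fun n => ?_
      rw [← hwu n]
      have hs : Summable fun p : X × Y => α p.1 p.2 * (w n p).toReal :=
        Summable.of_nonneg_of_le (hterm _)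
          (fun p => mul_le_of_le_one_left ENNReal.toReal_nonneg (hα _ _).2)
          (ENNReal.summable_toReal (w n).tsum_coe_ne_top)
      exact hs.le_tsum (x, y) fun p _ => hterm _ p
    have h3 := ENNReal.toReal_pos hpos.ne' hgt
    have h4 := (hα x y).1
    exact (mul_eq_zero.1 (le_antisymm h2 (mul_nonneg h4 h3.le))).resolve_right h3.ne'
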